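/- Let (E, ‖·‖) be a real Banach space with a Schauder basis (e_n)_{n≥1} and associated biorthogonal system (e_n)_{n≥1}, (e*_n)_{n≥1}, and fix x* ∈ E. For each k ≥ 1 let f_k : E → ℝ be a convex continuous function such that: (i) for all n ≥ 1 there exists a_n > 0 such that for all k ≥ 1 the directional derivative f_k'(x; e_n) exists for every x in I_{x*,a_n} := {x* + t e_n : |t| < a_n}; (ii) the series Σ_{k=1}^{∞} f_k(x) converges pointwise to a function f : E → ℝ; (iii) for each n ≥ 1 the series Σ_{k=1}^{∞} f_k'(x; e_n) converges uniformly for x ∈ I_{x*,a_n}. Then each f_k is Gâteaux-differentiable at x*, the convex continuous function f is Gâteaux-differentiable at x*, and f'(x*; e_n) = Σ_{k=1}^{∞} f_k'(x*; e_n) for all n ≥ 1. -/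

import Mathlib

open Filter Topology

/-- `f` has directional derivative `L` at `x` in the direction `h`. -/
def HasDirDeriv {E : Type*} [AddCommGroup E] [Module ℝ E] (f : E → ℝ) (x h : E) (L : ℝ) : Prop :=
  Tendsto (fun t : ℝ => (f (x + t • h) - f x) / t) (𝓝[≠] (0 : ℝ)) (𝓝 L)

/-- `f` is Gâteaux-differentiable at `x`. -/
def GateauxDiffAt {E : Type*} [AddCommGroup E] [Module ℝ E] [TopologicalSpace E]
    (f : E → ℝ) (x : E) : Prop :=
  ∃ F : E →L[ℝ] ℝ, ∀ h : E, HasDirDeriv f x h (F h)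

theorem hdd_iff {E : Type*} [AddCommGroup E] [Module ℝ E] (f : E → ℝ) (x h : E) (L : ℝ) :
    HasDirDeriv f x h L ↔ HasDerivAt (fun t : ℝ => f (x + t • h)) L 0 := by
  rw [hasDerivAt_iff_tendsto_slope_zero]
  unfold HasDirDeriv
  have : (fun t : ℝ => (f (x + t • h) - f x) / t) =
      fun t : ℝ => t⁻¹ • (f (x + (0 + t) • h) - f (x + (0:ℝ) • h)) := by
    funext t
    simp [div_eq_inv_mul]
  rw [this]

theorem exists_subgrad {E : Type*} [NormedAddCommGroup E] [NormedSpace ℝ E]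
    (g : E → ℝ) (hg : ConvexOn ℝ Set.univ g) (hc : Continuous g) (x : E) :
    ∃ F : E →L[ℝ] ℝ, ∀ h, F h ≤ g (x + h) - g x := by
  have h1 := hg.convex_strict_epigraph
  have h2 : IsOpen {p : E × ℝ | p.1 ∈ Set.univ ∧ g p.1 < p.2} := by
    simp only [Set.mem_univ, true_and]
    exact isOpen_lt (hc.comp continuous_fst) continuous_snd
  obtain ⟨Φ, hΦ⟩ := geometric_hahn_banach_point_open (x := (x, g x)) h1 h2 (by simp)
  have hs : ∀ y r, Φ (y, r) = Φ (y, 0) + r * Φ (0, 1) := by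
    intro y r
    have : ((y, r) : E × ℝ) = (y, 0) + r • (0, 1) := by simp
    rw [this, map_add, map_smul, smul_eq_mul]
  have hlt : ∀ y r, g y < r → Φ (x, 0) + g x * Φ (0, 1) < Φ (y, 0) + r * Φ (0, 1) := by
    intro y r hr
    have := hΦ (y, r) ⟨trivial, hr⟩
    rwa [hs x, hs y] at this
  have hcpos : 0 < Φ (0, 1) := by
    have := hlt x (g x + 1) (by linarith)
    linarith
  set c := Φ (0, 1) with hcdef
  refine ⟨-(c⁻¹ • (Φ.comp (ContinuousLinearMap.inl ℝ E ℝ))), fun h => ?_⟩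
  refine le_of_forall_pos_le_add fun ε hε => ?_
  have h3 := hlt (x + h) (g (x + h) + ε) (by linarith)
  have h4 : Φ (x + h, 0) = Φ (x, 0) + Φ (h, 0) := by
    rw [← map_add]; simp
  rw [h4] at h3
  have h5 : -(c⁻¹ * Φ (h, 0)) ≤ g (x + h) - g x + ε := by
    have h6 : c * (c⁻¹ * Φ (h, 0)) = Φ (h, 0) := by field_simp
    by_contra hcon
    push Not at hcon
    have := mul_lt_mul_of_pos_left hcon hcpos
    nlinarith
  simpa using h5

theorem gateaux_of_basis {E : Type*} [NormedAddCommGroup E] [NormedSpace ℝ E]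
    (e : ℕ → E) (hd : closure (Submodule.span ℝ (Set.range e) : Set E) = Set.univ)
    (g : E → ℝ) (hg : ConvexOn ℝ Set.univ g) (hc : Continuous g) (x : E)
    (he : ∀ n, ∃ L, HasDirDeriv g x (e n) L) : GateauxDiffAt g x := by
  obtain ⟨F, hF⟩ := exists_subgrad g hg hc x
  refine ⟨F, ?_⟩
  -- Lipschitz near x
  have hlip : LocallyLipschitzOn Set.univ g :=
    (hg.locallyLipschitzOn_iff_continuousOn isOpen_univ).2 hc.continuousOn
  obtain ⟨K, U, hU, hK⟩ := hlip (Set.mem_univ x)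
  rw [nhdsWithin_univ] at hU
  have hdd : ∀ h L, HasDirDeriv g x h L ↔
      HasDerivAt (fun t : ℝ => g (x + t • h) - g x - F (t • h)) (L - F h) 0 := by
    intro h L
    rw [hdd_iff]
    have hl : HasDerivAt (fun t : ℝ => F (t • h)) (F h) 0 := by
      simpa using (hasDerivAt_id (0:ℝ)).mul_const (F h)
    constructor
    · intro H
      exact (H.sub_const _).sub hl
    · intro H
      have := (H.add hl).add_const (g x)
      simpa using this
  have hpos : ∀ h, 0 ≤ g (x + h) - g x - F h := fun h => by linarith [hF h]
  -- the smallness set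
  have key : ∀ h, HasDirDeriv g x h (F h) ↔
      ∀ ε > 0, ∀ᶠ t : ℝ in 𝓝 0, g (x + t • h) - g x - F (t • h) ≤ ε * |t| := by
    intro h
    rw [hdd, sub_self, hasDerivAt_iff_isLittleO, Asymptotics.isLittleO_iff]
    have : ∀ t : ℝ, |g (x + t • h) - g x - t * F h| = g (x + t • h) - g x - t * F h := by
      intro t
      have := hpos (t • h)
      simp only [map_smul, smul_eq_mul] at this
      exact abs_of_nonneg this
    simp [this]
  let W : Submodule ℝ E :=
    { carrier := {h | HasDirDeriv g x h (F h)}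
      zero_mem' := by
        simp only [Set.mem_setOf_eq]
        rw [key]
        intro ε hε
        filter_upwards with t
        simp; positivity
      add_mem' := by
        intro h1 h2 m1 m2
        simp only [Set.mem_setOf_eq] at *
        rw [key] at *
        intro ε hε
        have ht : Tendsto (fun t : ℝ => 2 * t) (𝓝 0) (𝓝 0) := by
          have : Continuous (fun t : ℝ => 2 * t) := by fun_prop
          simpa using this.tendsto 0
        filter_upwards [ht.eventually (m1 (ε/2) (by positivity)),
          ht.eventually (m2 (ε/2) (by positivity))] with t p1 p2
        have hcv := hg.2 (Set.mem_univ (x + (2 * t) • h1)) (Set.mem_univ (x + (2 * t) • h2))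
          (by norm_num : (0:ℝ) ≤ 1/2) (by norm_num : (0:ℝ) ≤ 1/2) (by norm_num)
        have hx : (1/2 : ℝ) • (x + (2 * t) • h1) + (1/2 : ℝ) • (x + (2 * t) • h2)
            = x + t • (h1 + h2) := by module
        rw [hx] at hcv
        simp only [map_smul, map_add, smul_eq_mul, abs_mul, abs_two] at *
        linarith
      smul_mem' := by
        intro c h m
        simp only [Set.mem_setOf_eq] at *
        rw [key] at *
        intro ε hε
        have ht : Tendsto (fun t : ℝ => t * c) (𝓝 0) (𝓝 0) := by
          have : Continuous (fun t : ℝ => t * c) := by fun_prop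
          simpa using this.tendsto 0
        filter_upwards [ht.eventually (m (ε/(|c|+1)) (by positivity))] with t p
        rw [smul_smul]
        refine p.trans ?_
        rw [abs_mul, div_mul_eq_mul_div, div_le_iff₀ (by positivity)]
        nlinarith [abs_nonneg t, abs_nonneg c, mul_nonneg hε.le (abs_nonneg t)] }
  have hspan : Submodule.span ℝ (Set.range e) ≤ W := by
    rw [Submodule.span_le]
    rintro _ ⟨n, rfl⟩
    obtain ⟨L, hL⟩ := he n
    have h1 := (hdd _ _).1 hL
    have hmin : IsLocalMin (fun t : ℝ => g (x + t • e n) - g x - F (t • e n)) 0 := by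
      filter_upwards with t
      simpa using hpos (t • e n)
    have := hmin.hasDerivAt_eq_zero h1
    have hLF : L = F (e n) := by linarith
    rw [hLF] at hL
    exact hL
  intro h
  rw [key]
  intro ε hε
  have hh : h ∈ closure (Submodule.span ℝ (Set.range e) : Set E) := by rw [hd]; trivial
  set M : ℝ := K + ‖F‖ + 1 with hM
  have hMpos : 0 < M := by positivity
  obtain ⟨h', hh', hdist⟩ := Metric.mem_closure_iff.1 hh (ε / (2 * M)) (by positivity)
  have m := (key h').1 (hspan hh') (ε/2) (by positivity)
  have ev : ∀ u : E, ∀ᶠ t : ℝ in 𝓝 0, x + t • u ∈ U := by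
    intro u
    have hcu : Continuous (fun t : ℝ => x + t • u) := by fun_prop
    have := hcu.tendsto 0
    simp only [zero_smul, add_zero] at this
    exact this.eventually_mem hU
  filter_upwards [m, ev h, ev h'] with t p1 p2 p3
  have q1 := hK.dist_le_mul _ p2 _ p3
  rw [Real.dist_eq, dist_add_left, dist_eq_norm, ← smul_sub, norm_smul, Real.norm_eq_abs] at q1
  rw [dist_eq_norm] at hdist
  have q2 : |F (t • (h - h'))| ≤ ‖F‖ * (|t| * ‖h - h'‖) := by
    have := F.le_opNorm (t • (h - h'))
    rwa [norm_smul, Real.norm_eq_abs, Real.norm_eq_abs] at this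
  have q3 : F (t • (h - h')) = F (t • h) - F (t • h') := by rw [smul_sub, map_sub]
  have q4 : M * ‖h - h'‖ ≤ ε / 2 := by
    rw [lt_div_iff₀ (by positivity)] at hdist
    nlinarith
  have q5 := mul_le_mul_of_nonneg_right q4 (abs_nonneg t)
  have q6 : 0 ≤ |t| * ‖h - h'‖ := by positivity
  have q7 := (abs_le.1 q1).2
  have q8 := (abs_le.1 q2).1
  nlinarith

/-- **Proposition 4.** Let `E` be a real Banach space with a Schauder basis `(e_n)` and
biorthogonal system `(e_n), (e*_n)`, and `x* ∈ E`.  Let `f_k : E → ℝ` be convex continuous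
functions such that (i) for every `n` there is `a_n > 0` such that every `f_k` has a
directional derivative `f_k'(x; e_n)` at every `x ∈ I_{x*,a_n} = {x* + t e_n : |t| < a_n}`,
(ii) `∑_k f_k` converges pointwise to `f`, and (iii) for every `n` the series
`∑_k f_k'(·; e_n)` converges uniformly on `I_{x*,a_n}`.  Then every `f_k` is
Gâteaux-differentiable at `x*`, `f` is Gâteaux-differentiable at `x*`, and
`f'(x*; e_n) = ∑_k f_k'(x*; e_n)` for all `n`. -/
theorem statement7 {E : Type*} [NormedAddCommGroup E] [NormedSpace ℝ E] [CompleteSpace E]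
    (e : ℕ → E) (estar : ℕ → E →L[ℝ] ℝ)
    (hbo1 : ∀ n, estar n (e n) = 1)
    (hbo2 : ∀ n m, n ≠ m → estar n (e m) = 0)
    (hbasis : ∀ x : E, ∃! a : ℕ → ℝ,
      Tendsto (fun k : ℕ => ∑ n ∈ Finset.range k, a n • e n) atTop (𝓝 x))
    (hrepr : ∀ x : E,
      Tendsto (fun k : ℕ => ∑ n ∈ Finset.range k, estar n x • e n) atTop (𝓝 x))
    (xs : E)
    (fk : ℕ → E → ℝ)
    (hconv : ∀ k, ConvexOn ℝ Set.univ (fk k)) (hcont : ∀ k, Continuous (fk k))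
    (a : ℕ → ℝ) (ha : ∀ n, 0 < a n)
    -- (i): each `f_k` has directional derivative `d k n x` in direction `e_n` on `I_{x*,a_n}`
    (d : ℕ → ℕ → E → ℝ)
    (hi : ∀ n k : ℕ, ∀ x ∈ {y : E | ∃ t : ℝ, |t| < a n ∧ y = xs + t • e n},
      HasDirDeriv (fk k) x (e n) (d k n x))
    -- (ii): `∑_k f_k` converges pointwise to `f`
    (f : E → ℝ)
    (hf : ∀ x : E, Tendsto (fun K : ℕ => ∑ k ∈ Finset.range K, fk k x) atTop (𝓝 (f x)))
    -- (iii): for every `n`, `∑_k f_k'(·; e_n)` converges uniformly on `I_{x*,a_n}`, to `S n`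
    (S : ℕ → E → ℝ)
    (hiii : ∀ n : ℕ, TendstoUniformlyOn (fun K x => ∑ k ∈ Finset.range K, d k n x) (S n)
      atTop {y : E | ∃ t : ℝ, |t| < a n ∧ y = xs + t • e n}) :
    (∀ k, GateauxDiffAt (fk k) xs) ∧ GateauxDiffAt f xs ∧
      ∀ n : ℕ, HasDirDeriv f xs (e n) (S n xs) := by
  have hd : closure (Submodule.span ℝ (Set.range e) : Set E) = Set.univ := by
    refine Set.eq_univ_of_forall fun x => ?_
    refine mem_closure_of_tendsto (hrepr x) (Eventually.of_forall fun k => ?_)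
    exact Submodule.sum_mem _ fun n _ =>
      Submodule.smul_mem _ _ (Submodule.subset_span ⟨n, rfl⟩)
  have hmem : ∀ n, xs ∈ {y : E | ∃ t : ℝ, |t| < a n ∧ y = xs + t • e n} := fun n =>
    ⟨0, by simpa using ha n, by simp⟩
  have hpc : ∀ K : ℕ, ConvexOn ℝ Set.univ (fun x => ∑ k ∈ Finset.range K, fk k x) := by
    intro K
    induction K with
    | zero => simpa using convexOn_const (0:ℝ) convex_univ
    | succ K ih =>
      simp only [Finset.sum_range_succ]
      exact ih.add (hconv K)
  have hfc : ConvexOn ℝ Set.univ f := by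
    refine ⟨convex_univ, fun x _ y _ p q hp hq hpq => ?_⟩
    refine le_of_tendsto_of_tendsto (hf _) (((hf x).const_smul p).add ((hf y).const_smul q))
      (Eventually.of_forall fun K => ?_)
    exact (hpc K).2 (Set.mem_univ x) (Set.mem_univ y) hp hq hpq
  have hfcont : Continuous f := by
    have hcl : ∀ M : ℕ, IsClosed {x : E | ∀ K : ℕ, ∑ k ∈ Finset.range K, fk k x ≤ (M:ℝ)} := by
      intro M
      simp only [Set.setOf_forall]
      refine isClosed_iInter fun K => isClosed_le ?_ continuous_const
      exact continuous_finsetSum _ fun k _ => hcont k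
    have hU : ⋃ M : ℕ, {x : E | ∀ K : ℕ, ∑ k ∈ Finset.range K, fk k x ≤ (M:ℝ)} = Set.univ := by
      refine Set.eq_univ_of_forall fun x => ?_
      obtain ⟨B, hB⟩ := (hf x).bddAbove_range
      obtain ⟨M, hM⟩ := exists_nat_ge B
      exact Set.mem_iUnion.2 ⟨M, fun K => (hB ⟨K, rfl⟩).trans hM⟩
    obtain ⟨M, x0, hx0⟩ := nonempty_interior_of_iUnion_of_closed hcl hU
    have hb : (𝓝 x0).IsBoundedUnder (· ≤ ·) f := by
      refine ⟨M, ?_⟩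
      rw [eventually_map]
      filter_upwards [mem_interior_iff_mem_nhds.1 hx0] with y hy
      exact le_of_tendsto (hf y) (Eventually.of_forall hy)
    have hne : (Set.univ : Set E).Nonempty := ⟨x0, Set.mem_univ x0⟩
    have hex : ∃ x₀ ∈ (Set.univ : Set E), (𝓝 x₀).IsBoundedUnder (· ≤ ·) f := ⟨x0, Set.mem_univ x0, hb⟩
    have : ContinuousOn f Set.univ := ((hfc.continuousOn_tfae isOpen_univ hne).out 3 1).1 hex
    exact continuousOn_univ.1 this
  have hder : ∀ n : ℕ, HasDirDeriv f xs (e n) (S n xs) := by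
    intro n
    rw [hdd_iff]
    have hm : ∀ t ∈ Set.Ioo (-a n) (a n),
        xs + t • e n ∈ {y : E | ∃ t : ℝ, |t| < a n ∧ y = xs + t • e n} := fun t ht =>
      ⟨t, abs_lt.2 ht, rfl⟩
    have := hasDerivAt_of_tendstoUniformlyOn (l := atTop) (s := Set.Ioo (-a n) (a n)) (x := (0:ℝ))
      (f := fun K t => ∑ k ∈ Finset.range K, fk k (xs + t • e n))
      (f' := fun K t => ∑ k ∈ Finset.range K, d k n (xs + t • e n))
      (g := fun t => f (xs + t • e n))
      (g' := fun t => S n (xs + t • e n)) isOpen_Ioo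
      (by
        intro u hu
        filter_upwards [hiii n u hu] with K hK t ht
        exact hK _ (hm t ht))
      (by
        refine Eventually.of_forall fun K t ht => ?_
        refine HasDerivAt.fun_sum fun k _ => ?_
        have h1 := (hdd_iff _ _ _ _).1 (hi n k _ (hm t ht))
        have h2 : HasDerivAt (fun s : ℝ => fk k (xs + t • e n + s • e n))
            (d k n (xs + t • e n)) (t - t) := by rwa [sub_self]
        have h3 := h2.comp_sub_const t t
        have h4 : (fun s : ℝ => fk k (xs + t • e n + (s - t) • e n)) =
            fun s : ℝ => fk k (xs + s • e n) := by
          funext s; congr 1; module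
        rwa [h4] at h3)
      (fun t _ => hf _) ⟨by linarith [ha n], ha n⟩
    simpa using this
  refine ⟨fun k => ?_, ?_, hder⟩
  · exact gateaux_of_basis e hd (fk k) (hconv k) (hcont k) xs
      fun n => ⟨_, hi n k xs (hmem n)⟩
  · exact gateaux_of_basis e hd f hfc hfcont xs fun n => ⟨_, hder n⟩
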